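/- Let G be a finite subgroup of N such that π(G) = N/T (the whole order-8 quotient), the order of G ∩ T is 1 or 2, and no point of ℂˣ×ℂˣ is fixed by every element of G. Then G is conjugate by an element of N to one of the following three subgroups: (1) ⟨τ_{−1,−1}·s, ι₁·s⟩, generated by (x,y) ↦ (−y,−x) and (x,y) ↦ (y⁻¹,x), isomorphic to the dihedral group D₄ of order 8; (2) ⟨τ_{−1,−1}, s, ι₁·s⟩, generated by (x,y) ↦ (−x,−y), (x,y) ↦ (y,x) and (x,y) ↦ (y⁻¹,x), isomorphic to C₂ × D₄ of order 16; (3) ⟨τ_{−1,−1}, τ_{1,−1}·s, ι₁·s⟩, generated by (x,y) ↦ (−x,−y), (x,y) ↦ (y,−x) and (x,y) ↦ (y⁻¹,x), a group of order 16 isomorphic to C₂²⋊C₄ (GAP ID (16,3)). -/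

import Mathlib

noncomputable section

/-- The torus ℂˣ × ℂˣ on which the group N acts. -/
abbrev TT : Type := ℂˣ × ℂˣ

/-- The inversion ι₁ : (x,y) ↦ (x⁻¹, y), as a group automorphism of the torus. -/
def j1 : MulAut TT := MulEquiv.prodCongr (MulEquiv.inv ℂˣ) (MulEquiv.refl ℂˣ)

/-- The inversion ι₂ : (x,y) ↦ (x, y⁻¹), as a group automorphism of the torus. -/
def j2 : MulAut TT := MulEquiv.prodCongr (MulEquiv.refl ℂˣ) (MulEquiv.inv ℂˣ)

/-- The swap s : (x,y) ↦ (y,x), as a group automorphism of the torus. -/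
def sA : MulAut TT := MulEquiv.prodComm

/-- D = ⟨ι₁, ι₂, s⟩ ≅ C₂≀C₂ ≅ D₄, the group of automorphisms of the torus permuting
the four boundary lines of ℙ¹×ℙ¹. -/
def DD : Subgroup (MulAut TT) := Subgroup.closure {j1, j2, sA}

/-- N = T ⋊ D, the normalizer of the maximal torus in Aut(ℙ¹×ℙ¹): the group of
bijections of ℂˣ × ℂˣ generated by the scalings τ_{a,b} : (x,y) ↦ (ax,by),
the inversions ι₁, ι₂, and the swap s.  The element ⟨(a,b), d⟩ acts on p ∈ ℂˣ × ℂˣ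
by p ↦ (a,b) * d(p). -/
abbrev NQ : Type := SemidirectProduct TT DD DD.subtype

/-- ι₁ as an element of D. -/
def dj1 : DD := ⟨j1, Subgroup.subset_closure (by simp)⟩

/-- ι₂ as an element of D. -/
def dj2 : DD := ⟨j2, Subgroup.subset_closure (by simp)⟩

/-- s as an element of D. -/
def dsA : DD := ⟨sA, Subgroup.subset_closure (by simp)⟩

/-- ι₁ι₂ as an element of D. -/
def d12 : DD := dj1 * dj2

/-- ι₁·s (i.e. (x,y) ↦ (y⁻¹, x)) as an element of D. -/
def d1s : DD := dj1 * dsA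

/-- The scaling τ_{a,b} : (x,y) ↦ (ax, by), as an element of N. -/
def tl (a b : ℂˣ) : NQ := SemidirectProduct.inl ((a, b) : TT)

/-- The element of N given by an element of D. -/
def rr (d : DD) : NQ := SemidirectProduct.inr d

/-- The scaling subgroup T ≤ N. -/
def Tsub : Subgroup NQ := (SemidirectProduct.inl : TT →* NQ).range

/-- The projection π : N → N/T ≅ D. -/
def πN : NQ →* DD := SemidirectProduct.rightHom

/-- ζ_m = exp(2πi/m), a fixed primitive m-th root of unity in ℂ (as a unit). -/
def ζu (m : ℕ) : ℂˣ :=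
  Units.mk0 (Complex.exp (2 * Real.pi * Complex.I / m)) (Complex.exp_ne_zero _)

/-- The point of ℂˣ × ℂˣ is fixed by the element g of N. -/
def fixes (g : NQ) (p : TT) : Prop := g.left * (g.right : MulAut TT) p = p

/-!
Since `ℂ` is algebraically closed, every lift to `N` of the rotation `r = ι₁s` is conjugate by a
scaling to `r` itself, so we may assume `r ∈ G`. Write `K = G ∩ T`. If `|K| = 2`, then `K` is
centralized by `r`, which forces `K = ⟨τ_{-1,-1}⟩`. A lift `τ_{a,b}s ∈ G` of the swap satisfies
`(τ_{a,b}s)² = τ_{ab,ab} ∈ K` and `(r τ_{a,b}s)² = τ_{1,a²} ∈ K`. These two constraints leave, up to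
multiplication by `K`, only `s` and `τ_{-1,-1}s` when `K = 1`, and `s` and `τ_{1,-1}s` when
`|K| = 2`; as `G` is generated by `r`, this lift and `K`, it is one of four groups. The one with
`K = 1` and `s ∈ G` is `D`, which fixes the point `(1, 1)`.
-/

lemma units_neg_one_ne_one {R : Type*} [Ring R] [CharZero R] : (-1 : Rˣ) ≠ 1 := by
  norm_num [Units.ext_iff]

section Group

variable {G G' : Type*} [Group G] [Group G']

lemma eq_of_le_of_map_le_of_inf_ker_le {f : G →* G'} {H K : Subgroup G} (hHK : H ≤ K)
    (hmap : K.map f ≤ H.map f) (hker : K ⊓ f.ker ≤ H) : K = H := by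
  refine le_antisymm (fun k hk ↦ ?_) hHK
  obtain ⟨h, hh, hhk⟩ := hmap ⟨k, hk, rfl⟩
  have hdiff : k * h⁻¹ ∈ H :=
    hker ⟨K.mul_mem hk (K.inv_mem (hHK hh)), by simp [hhk]⟩
  simpa using H.mul_mem hdiff hh

lemma card_inf_ker_mul_card_map (f : G →* G') (K : Subgroup G) :
    Nat.card (K ⊓ f.ker : Subgroup G) * Nat.card (K.map f) = Nat.card K := by
  rw [← Subgroup.relIndex_ker, ← Subgroup.inf_relIndex_left, ← Subgroup.relIndex_bot_left,
    ← Subgroup.relIndex_bot_left (H := K)]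
  exact Subgroup.relIndex_mul_relIndex _ _ _ bot_le inf_le_left

lemma card_map_conj_inf_of_normal (K T : Subgroup G) [T.Normal] (g : G) :
    Nat.card (K.map (MulAut.conj g).toMonoidHom ⊓ T : Subgroup G) =
      Nat.card (K ⊓ T : Subgroup G) := by
  have hT : T.map (MulAut.conj g).toMonoidHom = T := Subgroup.Normal.conj_smul_eq_self g T
  have hinj : Function.Injective (MulAut.conj g).toMonoidHom := (MulAut.conj g).injective
  conv_lhs => rw [← hT, ← Subgroup.map_inf _ _ _ hinj]
  exact Subgroup.card_map_of_injective hinj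

lemma mem_zpowers_iff_of_mul_self_eq_one {x y : G} (hx : x * x = 1) :
    y ∈ Subgroup.zpowers x ↔ y = 1 ∨ y = x := by
  constructor
  · rintro ⟨k, rfl⟩
    rcases Int.even_or_odd' k with ⟨m, rfl | rfl⟩
    · simp [zpow_mul, zpow_ofNat, pow_two, hx]
    · simp [zpow_add, zpow_mul, zpow_ofNat, pow_two, hx]
  · rintro (rfl | rfl)
    · exact one_mem _
    · exact Subgroup.mem_zpowers y

lemma exists_eq_zpowers_and_commute_of_card_eq_two {K : Subgroup G} (hK : Nat.card K = 2) {g : G}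
    (hg : ∀ k ∈ K, g * k * g⁻¹ ∈ K) : ∃ k ≠ 1, K = Subgroup.zpowers k ∧ Commute k g := by
  obtain ⟨⟨k, hkK⟩, hk_ne, hk_unique⟩ := (Nat.card_eq_two_iff' (1 : K)).mp hK
  replace hk_ne : k ≠ 1 := fun h ↦ hk_ne (Subtype.ext h)
  replace hk_unique : ∀ y ∈ K, y ≠ 1 → y = k := fun y hy hy_ne ↦
    congrArg Subtype.val (hk_unique ⟨y, hy⟩ fun h ↦ hy_ne (congrArg Subtype.val h))
  refine ⟨k, hk_ne, le_antisymm (fun y hy ↦ ?_) (Subgroup.zpowers_le.mpr hkK), ?_⟩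
  · by_cases hy_one : y = 1
    · exact hy_one ▸ one_mem _
    · exact hk_unique y hy hy_one ▸ Subgroup.mem_zpowers k
  · have hconj : g * k * g⁻¹ = k := hk_unique _ (hg k hkK) (by simpa using hk_ne)
    exact (mul_inv_eq_iff_eq_mul.mp hconj).symm

lemma nonempty_sup_mulEquiv_prod {H K : Subgroup G} (hcomm : ∀ h ∈ H, ∀ k ∈ K, Commute h k)
    (hdisj : Disjoint H K) : Nonempty ((H ⊔ K : Subgroup G) ≃* H × K) := by
  have hcomm' (h : H) (k : K) : Commute (H.subtype h) (K.subtype k) := hcomm h h.2 k k.2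
  have hinj : Function.Injective (H.subtype.noncommCoprod K.subtype hcomm') :=
    (MonoidHom.noncommCoprod_injective _ _ _).mpr
      ⟨H.subtype_injective, K.subtype_injective, by simpa using hdisj⟩
  have hrange : (H.subtype.noncommCoprod K.subtype hcomm').range = H ⊔ K := by
    simp [MonoidHom.noncommCoprod_range]
  exact ⟨((MonoidHom.ofInjective hinj).trans (MulEquiv.subgroupCongr hrange)).symm⟩

end Group

section Dihedral

variable {G : Type*} [Group G]

/-- The homomorphism out of the dihedral group of order `2n` determined by the images of its
rotations, as a homomorphism `f` from `ZMod n`, and by the image `s` of the reflection `sr 0`. -/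
def dihedralLift {n : ℕ} (f : Multiplicative (ZMod n) →* G) (s : G) (hs : s * s = 1)
    (hfs : ∀ i, SemiconjBy s (f i) (f i)⁻¹) : DihedralGroup n →* G where
  toFun
    | .r i => f (.ofAdd i)
    | .sr i => s * f (.ofAdd i)
  map_one' := map_one f
  map_mul' := by
    have hswap (i) : f i * s = s * (f i)⁻¹ := by simpa using (hfs i⁻¹).eq.symm
    rintro (i | i) (j | j)
    · simp
    · simp [← mul_assoc, hswap, sub_eq_neg_add]
    · simp [mul_assoc]
    · rw [mul_assoc, ← mul_assoc _ s, hswap, ← mul_assoc, ← mul_assoc, hs]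
      simp [sub_eq_neg_add]

lemma dihedralLift_injective {n : ℕ} {f : Multiplicative (ZMod n) →* G} {s : G} {hs : s * s = 1}
    {hfs : ∀ i, SemiconjBy s (f i) (f i)⁻¹} (hf : Function.Injective f) (hsf : s ∉ f.range) :
    Function.Injective (dihedralLift f s hs hfs) := by
  rw [injective_iff_map_eq_one]
  rintro (i | i) (h : _ = 1)
  · exact congrArg DihedralGroup.r (Multiplicative.ofAdd.injective (hf (h.trans (map_one f).symm)))
  · exact absurd ⟨(.ofAdd i)⁻¹, by rw [map_inv, eq_inv_of_mul_eq_one_left h]⟩ hsf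

lemma range_dihedralLift {n : ℕ} {f : Multiplicative (ZMod n) →* G} {s : G} {hs : s * s = 1}
    {hfs : ∀ i, SemiconjBy s (f i) (f i)⁻¹} :
    (dihedralLift f s hs hfs).range = Subgroup.zpowers s ⊔ f.range := by
  apply le_antisymm
  · rintro _ ⟨i | i, rfl⟩
    · exact Subgroup.mem_sup_right ⟨_, rfl⟩
    · exact Subgroup.mul_mem_sup (Subgroup.mem_zpowers s) ⟨_, rfl⟩
  · refine sup_le (Subgroup.zpowers_le.mpr ⟨.sr 0, ?_⟩) ?_
    · change s * f 1 = s
      simp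
    · rintro _ ⟨i, rfl⟩
      exact ⟨.r i.toAdd, rfl⟩

lemma nonempty_closure_pair_mulEquiv_dihedralGroup {s r : G} (hs : s * s = 1)
    (hsr : SemiconjBy s r r⁻¹) (hr : r ^ 2 ≠ 1) :
    Nonempty (Subgroup.closure {s, r} ≃* DihedralGroup (orderOf r)) := by
  let e : Multiplicative (ZMod (orderOf r)) ≃* Subgroup.zpowers r :=
    zmodMulEquivOfGenerator (g := ⟨r, Subgroup.mem_zpowers r⟩)
      (by rintro ⟨_, k, rfl⟩; exact ⟨k, by ext; simp⟩) (Nat.card_zpowers r)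
  let f := (Subgroup.zpowers r).subtype.comp e.toMonoidHom
  have hf_range : f.range = Subgroup.zpowers r := by
    simp [f, MonoidHom.range_comp, ← MonoidHom.range_eq_map]
  have hf_inv (i) : SemiconjBy s (f i) (f i)⁻¹ := by
    obtain ⟨k, hk⟩ := (e i).2
    rw [show f i = r ^ k from hk.symm, ← inv_zpow]
    exact hsr.zpow_right k
  -- A power `s` of `r` would commute with `r`, so that `r = s r s⁻¹ = r⁻¹`.
  have hs_notMem : s ∉ f.range := by
    rw [hf_range]
    rintro ⟨k, rfl⟩
    have hr_inv : r = r⁻¹ :=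
      mul_right_cancel (((Commute.refl r).zpow_left k).eq.symm.trans hsr.eq)
    exact hr (by rw [pow_two, mul_eq_one_iff_eq_inv.mpr hr_inv])
  have hinj := dihedralLift_injective (hs := hs) (hfs := hf_inv)
    ((Subgroup.zpowers r).subtype_injective.comp e.injective) hs_notMem
  have hrange : (dihedralLift f s hs hf_inv).range = Subgroup.closure {s, r} := by
    rw [range_dihedralLift, hf_range, Set.insert_eq, Subgroup.closure_union,
      Subgroup.zpowers_eq_closure, Subgroup.zpowers_eq_closure]
  exact ⟨((MonoidHom.ofInjective hinj).trans (MulEquiv.subgroupCongr hrange)).symm⟩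

end Dihedral

open SemidirectProduct (inl inr rightHom)

lemma map_rightHom_map_conj_inl {N H : Type*} [Group N] [Group H] {φ : H →* MulAut N}
    (K : Subgroup (N ⋊[φ] H)) (n : N) :
    (K.map (MulAut.conj (inl n)).toMonoidHom).map rightHom = K.map rightHom := by
  rw [Subgroup.map_map]
  congr 1
  ext x
  simp

section TorusAutomorphisms

lemma dsA_apply (p : TT) : (dsA : MulAut TT) p = (p.2, p.1) := rfl

lemma d1s_apply (p : TT) : (d1s : MulAut TT) p = (p.2⁻¹, p.1) := rfl

lemma dsA_mul_self : dsA * dsA = 1 := rfl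

lemma d1s_mul_dsA_mul_self : d1s * dsA * (d1s * dsA) = 1 := by
  ext p : 3 <;> simp [dsA_apply, d1s_apply]

lemma semiconjBy_dsA_d1s : SemiconjBy dsA d1s d1s⁻¹ := by
  rw [SemiconjBy, eq_inv_mul_iff_mul_eq]
  ext p : 3 <;> simp [dsA_apply, d1s_apply]

lemma d1s_sq_ne_one : d1s ^ 2 ≠ 1 := by
  intro h
  have h_two := congrArg (fun d : DD ↦ ((d : MulAut TT) (Units.mk0 2 two_ne_zero, 1)).1) h
  replace h_two : (2 : ℂ)⁻¹ = 2 := by simpa [pow_two, d1s_apply, Units.ext_iff] using h_two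
  norm_num at h_two

lemma orderOf_d1s : orderOf d1s = 4 := by
  refine orderOf_eq_prime_pow (p := 2) (n := 1) d1s_sq_ne_one ?_
  ext p : 3 <;> simp [pow_succ, d1s_apply]

lemma closure_dsA_d1s : Subgroup.closure {dsA, d1s} = ⊤ := by
  have hs : dsA ∈ Subgroup.closure {dsA, d1s} := Subgroup.subset_closure (by simp)
  have hr : d1s ∈ Subgroup.closure {dsA, d1s} := Subgroup.subset_closure (by simp)
  have htop : Subgroup.closure (((↑) : DD → MulAut TT) ⁻¹' {j1, j2, sA}) = ⊤ :=
    Subgroup.closure_closure_coe_preimage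
  rw [eq_top_iff, ← htop, Subgroup.closure_le]
  rintro d (hd | hd | hd)
  · rw [show d = d1s * dsA from Subtype.ext hd]
    exact mul_mem hr hs
  · rw [show d = dsA * d1s from Subtype.ext hd]
    exact mul_mem hs hr
  · rwa [show d = dsA from Subtype.ext hd]

lemma nonempty_DD_mulEquiv_dihedralGroup : Nonempty (DD ≃* DihedralGroup 4) := by
  obtain ⟨e⟩ := nonempty_closure_pair_mulEquiv_dihedralGroup dsA_mul_self semiconjBy_dsA_d1s
    d1s_sq_ne_one
  rw [closure_dsA_d1s, orderOf_d1s] at e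
  exact ⟨Subgroup.topEquiv.symm.trans e⟩

lemma card_DD : Nat.card DD = 8 := by
  obtain ⟨e⟩ := nonempty_DD_mulEquiv_dihedralGroup
  rw [Nat.card_congr e.toEquiv, DihedralGroup.nat_card]

end TorusAutomorphisms

section Normalizer

lemma ker_πN : πN.ker = Tsub :=
  SemidirectProduct.range_inl_eq_ker_rightHom.symm

instance Tsub_normal : Tsub.Normal :=
  ker_πN ▸ πN.normal_ker

lemma tl_one_one : tl 1 1 = 1 := map_one _

lemma tl_mul_tl (a b c d : ℂˣ) : tl a b * tl c d = tl (a * c) (b * d) :=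
  (map_mul inl (a, b) (c, d)).symm

lemma tl_inj {a b c d : ℂˣ} : tl a b = tl c d ↔ a = c ∧ b = d := by
  simp [tl]

lemma tl_mem_Tsub (a b : ℂˣ) : tl a b ∈ Tsub := ⟨(a, b), rfl⟩

lemma exists_eq_tl_mul_rr {g : NQ} {d : DD} (hg : πN g = d) : ∃ a b, g = tl a b * rr d :=
  ⟨g.left.1, g.left.2, by rw [← hg]; exact (SemidirectProduct.inl_left_mul_inr_right g).symm⟩

lemma closure_rr_dsA_rr_d1s : Subgroup.closure {rr dsA, rr d1s} = (inr : DD →* NQ).range := by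
  rw [MonoidHom.range_eq_map, ← closure_dsA_d1s, MonoidHom.map_closure, Set.image_pair]
  rfl

lemma commute_tl_rr_d1s_iff {a b : ℂˣ} :
    Commute (tl a b) (rr d1s) ↔ tl a b = 1 ∨ tl a b = tl (-1) (-1) := by
  have h : Commute (tl a b) (rr d1s) ↔ b⁻¹ = a ∧ a = b := by
    simp [Commute, SemiconjBy, SemidirectProduct.ext_iff, tl, rr, d1s_apply, Prod.ext_iff, eq_comm]
  rw [h, ← tl_one_one, tl_inj, tl_inj]
  constructor
  · rintro ⟨hab, rfl⟩
    simpa using Units.inv_eq_self_iff a |>.mp hab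
  · rintro (⟨rfl, rfl⟩ | ⟨rfl, rfl⟩) <;> simp

lemma commute_tl_neg_one_rr (d : DD) : Commute (tl (-1) (-1)) (rr d) := by
  suffices h : (inr : DD →* NQ).range ≤ Subgroup.centralizer {tl (-1) (-1)} from
    (Subgroup.mem_centralizer_singleton_iff.mp (h ⟨d, rfl⟩)).symm
  rw [← closure_rr_dsA_rr_d1s, Subgroup.closure_le]
  rintro _ (rfl | rfl) <;> rw [SetLike.mem_coe, Subgroup.mem_centralizer_singleton_iff]
  · ext1 <;> simp [tl, rr, dsA_apply]
  · exact (commute_tl_rr_d1s_iff.mpr (.inr rfl)).eq.symm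

lemma tl_neg_one_mul_self : tl (-1) (-1) * tl (-1) (-1) = 1 := by
  simp [tl_mul_tl, tl_one_one]

lemma orderOf_tl_neg_one : orderOf (tl (-1) (-1)) = 2 := by
  refine orderOf_eq_prime (by rw [pow_two, tl_neg_one_mul_self]) ?_
  rw [← tl_one_one, Ne, tl_inj]
  exact fun h ↦ units_neg_one_ne_one h.1

lemma tl_mul_rr_dsA_mul_self (a b : ℂˣ) :
    tl a b * rr dsA * (tl a b * rr dsA) = tl (a * b) (a * b) := by
  ext1 <;> simp [tl, rr, dsA_apply, dsA_mul_self, mul_comm]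

lemma rr_d1s_mul_tl_mul_rr_dsA_mul_self (a b : ℂˣ) :
    rr d1s * (tl a b * rr dsA) * (rr d1s * (tl a b * rr dsA)) = tl 1 (a * a) := by
  ext1 <;> simp [tl, rr, dsA_apply, d1s_apply, d1s_mul_dsA_mul_self]

lemma exists_conj_inl_eq_rr_d1s (a b : ℂˣ) :
    ∃ p : TT, MulAut.conj (inl p : NQ) (tl a b * rr d1s) = rr d1s := by
  -- The point `p = (x, y)` has to satisfy `x * a * y = 1` and `y * b = x`.
  obtain ⟨z, hz⟩ := IsAlgClosed.exists_pow_nat_eq ((b * a⁻¹ : ℂˣ) : ℂ) two_pos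
  have hz0 : z ≠ 0 := by
    rintro rfl
    exact (b * a⁻¹).ne_zero (by rw [← hz]; simp)
  obtain ⟨x, hx⟩ : ∃ x : ℂˣ, x ^ 2 = b * a⁻¹ := ⟨Units.mk0 z hz0, Units.ext hz⟩
  have hx' : x * a * (x * b⁻¹) = 1 :=
    calc x * a * (x * b⁻¹) = x ^ 2 * (b * a⁻¹)⁻¹ := by rw [pow_two, mul_inv_rev, inv_inv]; ac_rfl
      _ = 1 := by rw [hx, mul_inv_cancel]
  refine ⟨(x, x * b⁻¹), ?_⟩
  ext1
  · ext1 <;> simp [tl, rr, d1s_apply, hx']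
  · simp [tl, rr]

lemma fixes_inv_of_conj_inl_mem_range_inr {g : NQ} {p : TT}
    (h : MulAut.conj (inl p) g ∈ (inr : DD →* NQ).range) : fixes g p⁻¹ := by
  obtain ⟨d, hd⟩ := h
  have hleft : p * g.left * ((g.right : MulAut TT) p)⁻¹ = 1 := by
    simpa using (congrArg SemidirectProduct.left hd).symm
  rw [fixes, map_inv, eq_inv_iff_mul_eq_one, ← hleft]
  ac_rfl

end Normalizer

section ModelGroups

lemma nonempty_closure_tl_neg_one_mul_rr_dsA_mulEquiv :
    Nonempty (Subgroup.closure {tl (-1) (-1) * rr dsA, rr d1s} ≃* DihedralGroup 4) := by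
  have horder : orderOf (rr d1s) = 4 :=
    (orderOf_injective inr SemidirectProduct.inr_injective d1s).trans orderOf_d1s
  have hrefl : tl (-1) (-1) * rr dsA * (tl (-1) (-1) * rr dsA) = 1 := by
    simp [tl_mul_rr_dsA_mul_self, tl_one_one]
  have hsemi : SemiconjBy (rr dsA) (rr d1s) (rr d1s)⁻¹ :=
    semiconjBy_dsA_d1s.map (inr : DD →* NQ)
  have hsq : rr d1s ^ 2 ≠ 1 := pow_ne_one_of_lt_orderOf two_ne_zero (by omega)
  exact horder ▸ nonempty_closure_pair_mulEquiv_dihedralGroup hrefl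
    ((commute_tl_neg_one_rr d1s).inv_right.semiconjBy.mul_left hsemi) hsq

lemma nonempty_closure_tl_neg_one_rr_dsA_mulEquiv :
    Nonempty (Subgroup.closure {tl (-1) (-1), rr dsA, rr d1s} ≃*
      Multiplicative (ZMod 2) × DihedralGroup 4) := by
  have hclosure : Subgroup.closure {tl (-1) (-1), rr dsA, rr d1s} =
      Subgroup.zpowers (tl (-1) (-1)) ⊔ (inr : DD →* NQ).range := by
    rw [Set.insert_eq, Subgroup.closure_union, closure_rr_dsA_rr_d1s,
      Subgroup.zpowers_eq_closure]
  have hcomm : ∀ h ∈ Subgroup.zpowers (tl (-1) (-1)), ∀ k ∈ (inr : DD →* NQ).range,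
      Commute h k := by
    rintro _ ⟨n, rfl⟩ _ ⟨d, rfl⟩
    exact (commute_tl_neg_one_rr d).zpow_left n
  have hdisj : Disjoint (Subgroup.zpowers (tl (-1) (-1))) (inr : DD →* NQ).range := by
    rw [Subgroup.disjoint_def]
    rintro _ h ⟨d, rfl⟩
    have hT : (inr d : NQ) ∈ πN.ker :=
      ker_πN ▸ Subgroup.zpowers_le.mpr (tl_mem_Tsub (-1) (-1)) h
    rw [show d = 1 from hT, map_one]
  have hcard : Nat.card (Subgroup.zpowers (tl (-1) (-1))) = 2 :=
    (Nat.card_zpowers _).trans orderOf_tl_neg_one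
  obtain ⟨e⟩ := nonempty_sup_mulEquiv_prod hcomm hdisj
  obtain ⟨eD⟩ := nonempty_DD_mulEquiv_dihedralGroup
  exact ⟨(MulEquiv.subgroupCongr hclosure).trans <| e.trans <| MulEquiv.prodCongr
    (mulEquivOfPrimeCardEq hcard (by simp))
    ((MonoidHom.ofInjective SemidirectProduct.inr_injective).symm.trans eD)⟩

end ModelGroups

section NormalizedSubgroups

variable {G : Subgroup NQ}

lemma card_eq_card_inf_Tsub_mul_eight (himg : G.map πN = ⊤) :
    Nat.card G = Nat.card (G ⊓ Tsub : Subgroup NQ) * 8 := by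
  rw [← card_inf_ker_mul_card_map πN G, himg, ker_πN, Subgroup.card_top, card_DD]

lemma eq_closure_of_subset_of_inf_Tsub_le {S : Set NQ} {a b : ℂˣ} (hSG : S ⊆ G)
    (hs : tl a b * rr dsA ∈ S) (hr : rr d1s ∈ S) (hT : G ⊓ Tsub ≤ Subgroup.closure S) :
    G = Subgroup.closure S := by
  have hmap : (Subgroup.closure S).map πN = ⊤ := by
    rw [eq_top_iff, ← closure_dsA_d1s, MonoidHom.map_closure]
    refine Subgroup.closure_mono ?_
    rintro _ (rfl | rfl)
    · exact ⟨_, hs, by simp [πN, tl, rr]⟩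
    · exact ⟨_, hr, by simp [πN, rr]⟩
  exact eq_of_le_of_map_le_of_inf_ker_le ((Subgroup.closure_le G).mpr hSG) (hmap ▸ le_top)
    (ker_πN ▸ hT)

lemma exists_rr_d1s_mem_map_conj_inl (himg : G.map πN = ⊤) :
    ∃ p : TT, rr d1s ∈ G.map (MulAut.conj (inl p : NQ)).toMonoidHom := by
  obtain ⟨g, hg, hgr⟩ : d1s ∈ G.map πN := himg ▸ Subgroup.mem_top _
  obtain ⟨a, b, rfl⟩ := exists_eq_tl_mul_rr hgr
  obtain ⟨p, hp⟩ := exists_conj_inl_eq_rr_d1s a b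
  exact ⟨p, _, hg, hp⟩

lemma exists_tl_mul_rr_dsA_mem (himg : G.map πN = ⊤) (hr : rr d1s ∈ G) :
    ∃ a b, tl a b * rr dsA ∈ G ∧ tl (a * b) (a * b) ∈ G ⊓ Tsub ∧ tl 1 (a * a) ∈ G ⊓ Tsub := by
  obtain ⟨g, hg, hgs⟩ : dsA ∈ G.map πN := himg ▸ Subgroup.mem_top _
  obtain ⟨a, b, rfl⟩ := exists_eq_tl_mul_rr hgs
  refine ⟨a, b, hg, ⟨?_, tl_mem_Tsub _ _⟩, ⟨?_, tl_mem_Tsub _ _⟩⟩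
  · exact tl_mul_rr_dsA_mul_self a b ▸ mul_mem hg hg
  · exact rr_d1s_mul_tl_mul_rr_dsA_mul_self a b ▸ mul_mem (mul_mem hr hg) (mul_mem hr hg)

lemma inf_Tsub_eq_zpowers_tl_neg_one (hr : rr d1s ∈ G)
    (hcard : Nat.card (G ⊓ Tsub : Subgroup NQ) = 2) :
    G ⊓ Tsub = Subgroup.zpowers (tl (-1) (-1)) := by
  obtain ⟨k, hk_ne, hk, hcomm⟩ := exists_eq_zpowers_and_commute_of_card_eq_two hcard
    (g := rr d1s) fun k hk ↦
      ⟨G.mul_mem (G.mul_mem hr hk.1) (G.inv_mem hr), Tsub_normal.conj_mem k hk.2 _⟩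
  obtain ⟨⟨a, b⟩, rfl⟩ : k ∈ Tsub := (hk ▸ Subgroup.mem_zpowers k : k ∈ G ⊓ Tsub).2
  rw [hk]
  exact congrArg _ ((commute_tl_rr_d1s_iff.mp hcomm).resolve_left hk_ne)

lemma eq_closure_of_inf_Tsub_eq_bot (himg : G.map πN = ⊤) (hr : rr d1s ∈ G)
    (hT : G ⊓ Tsub = ⊥) (hG : ¬G ≤ (inr : DD →* NQ).range) :
    G = Subgroup.closure {tl (-1) (-1) * rr dsA, rr d1s} := by
  obtain ⟨a, b, hs, hab, haa⟩ := exists_tl_mul_rr_dsA_mem himg hr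
  rw [hT, Subgroup.mem_bot, ← tl_one_one, tl_inj] at hab haa
  have hb : b = a := mul_left_cancel (hab.1.trans haa.2.symm)
  have ha : a = 1 ∨ a = -1 := (Units.inv_eq_self_iff a).mp (inv_eq_of_mul_eq_one_right haa.2)
  have hGa : G = Subgroup.closure {tl a a * rr dsA, rr d1s} :=
    eq_closure_of_subset_of_inf_Tsub_le (by simp [Set.insert_subset_iff, hr, hb ▸ hs])
      (Set.mem_insert _ _) (by simp) (hT ▸ bot_le)
  rcases ha with rfl | rfl
  · rw [tl_one_one, one_mul, closure_rr_dsA_rr_d1s] at hGa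
    exact absurd hGa.le hG
  · exact hGa

lemma exists_tl_one_mul_rr_dsA_mem (himg : G.map πN = ⊤) (hr : rr d1s ∈ G)
    (hT : G ⊓ Tsub = Subgroup.zpowers (tl (-1) (-1))) :
    ∃ b : ℂˣ, (b = 1 ∨ b = -1) ∧ tl 1 b * rr dsA ∈ G := by
  have hmem {a b : ℂˣ} : tl a b ∈ G ⊓ Tsub ↔ a = 1 ∧ b = 1 ∨ a = -1 ∧ b = -1 := by
    rw [hT, mem_zpowers_iff_of_mul_self_eq_one tl_neg_one_mul_self, ← tl_one_one, tl_inj, tl_inj]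
  obtain ⟨a, b, hs, hab, haa⟩ := exists_tl_mul_rr_dsA_mem himg hr
  replace haa : a * a = 1 :=
    (hmem.mp haa).elim And.right fun h ↦ absurd h.1.symm units_neg_one_ne_one
  have ha : tl a a ∈ G := by
    refine (hmem.mpr ?_).1
    simpa using (Units.inv_eq_self_iff a).mp (inv_eq_of_mul_eq_one_right haa)
  refine ⟨a * b, (hmem.mp hab).imp And.left And.left, ?_⟩
  have hmul : tl a a * (tl a b * rr dsA) = tl 1 (a * b) * rr dsA := by
    rw [← mul_assoc, tl_mul_tl, haa]
  exact hmul ▸ G.mul_mem ha hs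

lemma eq_closure_or_of_inf_Tsub_eq_zpowers (himg : G.map πN = ⊤) (hr : rr d1s ∈ G)
    (hT : G ⊓ Tsub = Subgroup.zpowers (tl (-1) (-1))) :
    G = Subgroup.closure {tl (-1) (-1), rr dsA, rr d1s} ∨
      G = Subgroup.closure {tl (-1) (-1), tl 1 (-1) * rr dsA, rr d1s} := by
  have hτ : tl (-1) (-1) ∈ G := (hT ▸ Subgroup.mem_zpowers _ : tl (-1) (-1) ∈ G ⊓ Tsub).1
  obtain ⟨b, hb, hs⟩ := exists_tl_one_mul_rr_dsA_mem himg hr hT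
  have hGb : G = Subgroup.closure {tl (-1) (-1), tl 1 b * rr dsA, rr d1s} :=
    eq_closure_of_subset_of_inf_Tsub_le (a := 1) (b := b)
      (by simp [Set.insert_subset_iff, hr, hs, hτ]) (by simp) (by simp)
      (hT.trans_le (Subgroup.zpowers_le.mpr (Subgroup.subset_closure (by simp))))
  rcases hb with rfl | rfl
  · rw [tl_one_one, one_mul] at hGb
    exact .inl hGb
  · exact .inr hGb

end NormalizedSubgroups

/-!
STATEMENT 6: a finite subgroup G ≤ N with π(G) = N/T (the whole order-8 quotient),
|G ∩ T| ∈ {1,2}, and no fixed point on ℂˣ×ℂˣ is conjugate in N to one of: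
(1) ⟨τ_{−1,−1}·s, ι₁·s⟩ ≅ D₄ (order 8);
(2) ⟨τ_{−1,−1}, s, ι₁·s⟩ ≅ C₂ × D₄ (order 16);
(3) ⟨τ_{−1,−1}, τ_{1,−1}·s, ι₁·s⟩, of order 16 (≅ C₂²⋊C₄, GAP ID (16,3)).
-/
theorem classification_nu_D4 (G : Subgroup NQ) (hfin : Finite G)
    (himg : Subgroup.map πN G = ⊤)
    (hT : Nat.card (G ⊓ Tsub : Subgroup NQ) = 1 ∨ Nat.card (G ⊓ Tsub : Subgroup NQ) = 2)
    (hfree : ¬∃ p : TT, ∀ g ∈ G, fixes g p) :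
    (∃ h : NQ,
      Subgroup.map (MulAut.conj h).toMonoidHom G =
        Subgroup.closure {tl (-1) (-1) * rr dsA, rr d1s} ∧
      Nonempty ((Subgroup.closure {tl (-1) (-1) * rr dsA, rr d1s} : Subgroup NQ) ≃*
        DihedralGroup 4)) ∨
    (∃ h : NQ,
      Subgroup.map (MulAut.conj h).toMonoidHom G =
        Subgroup.closure {tl (-1) (-1), rr dsA, rr d1s} ∧
      Nonempty ((Subgroup.closure {tl (-1) (-1), rr dsA, rr d1s} : Subgroup NQ) ≃*
        Multiplicative (ZMod 2) × DihedralGroup 4)) ∨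
    (∃ h : NQ,
      Subgroup.map (MulAut.conj h).toMonoidHom G =
        Subgroup.closure {tl (-1) (-1), tl 1 (-1) * rr dsA, rr d1s} ∧
      Nat.card
        (Subgroup.closure {tl (-1) (-1), tl 1 (-1) * rr dsA, rr d1s} : Subgroup NQ) = 16) := by
  obtain ⟨p, hr⟩ := exists_rr_d1s_mem_map_conj_inl himg
  have himg' := (map_rightHom_map_conj_inl G p).trans himg
  have hcard := card_map_conj_inf_of_normal G Tsub (inl p)
  have hfree' : ¬G.map (MulAut.conj (inl p)).toMonoidHom ≤ (inr : DD →* NQ).range := fun hle ↦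
    hfree ⟨p⁻¹, fun g hg ↦ fixes_inv_of_conj_inl_mem_range_inr (hle ⟨g, hg, rfl⟩)⟩
  rcases hT with hT | hT
  · have hbot := Subgroup.card_eq_one.mp (hcard.trans hT)
    exact .inl ⟨inl p, eq_closure_of_inf_Tsub_eq_bot himg' hr hbot hfree',
      nonempty_closure_tl_neg_one_mul_rr_dsA_mulEquiv⟩
  · have hzpowers := inf_Tsub_eq_zpowers_tl_neg_one hr (hcard.trans hT)
    rcases eq_closure_or_of_inf_Tsub_eq_zpowers himg' hr hzpowers with hG | hG
    · exact .inr (.inl ⟨inl p, hG, nonempty_closure_tl_neg_one_rr_dsA_mulEquiv⟩)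
    · exact .inr (.inr ⟨inl p, hG,
        by rw [← hG, card_eq_card_inf_Tsub_mul_eight himg', hcard, hT]⟩)

end
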